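/- arXiv:1804.10778 — 2 statements merged into one kernel-verified Lean document; each statement's English description precedes it below -/
import Mathlib

section
/- Fix path data θ_p, φ_p, ρ_p ∈ ℝ for p ∈ {1,…,P}, an orientation ω ∈ ℝ, a constant c > 0, and a center (x₀, y₀) ∈ ℝ². The feasible set of the box-minimization problem with fixed orientation ω, namely the set of tuples (d₁, ℓ, w, (ν_p)_{p=1}^P) ∈ ℝ × ℝ × ℝ × ℝ^P such that, for every p, 0 < ν_p < d₁ + c·ρ_p, |cos(ω)(x_p(ν_p,d₁) − x₀) + sin(ω)(y_p(ν_p,d₁) − y₀)| ≤ ℓ/2, and |−sin(ω)(x_p(ν_p,d₁) − x₀) + cos(ω)(y_p(ν_p,d₁) − y₀)| ≤ w/2, is a convex subset of ℝ^{P+3}. -/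
/-- `x`-coordinate of the origin of a path with AoA `θ`, AoD `φ`, TDoA `ρ`,
orientation `ω`, post-reflection distance `ν` and first-path distance `d₁`. -/
noncomputable def pathX (c ω θ φ ρ ν d₁ : ℝ) : ℝ :=
  ν * Real.cos θ - (d₁ + c * ρ - ν) * Real.cos (φ + ω)

/-- `y`-coordinate of the origin of a path. -/
noncomputable def pathY (c ω θ φ ρ ν d₁ : ℝ) : ℝ :=
  ν * Real.sin θ - (d₁ + c * ρ - ν) * Real.sin (φ + ω)

/-- Convexity of the feasible set of the box-minimization problem with fixed
orientation `ω` (paper's problem (E7)): the tuples `(d₁, ℓ, w, ν)` such that,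
for every path `p`, `0 < ν_p < d₁ + c·ρ_p` and the two `ω`-rotated coordinates
of the `p`-th path origin relative to `(x₀, y₀)` are bounded by `ℓ/2` and
`w/2` respectively, form a convex set. -/
theorem boxMin_feasibleSet_convex (P : ℕ) (θ φ ρ : Fin P → ℝ)
    (ω c x₀ y₀ : ℝ) (hc : 0 < c) :
    Convex ℝ { t : ℝ × ℝ × ℝ × (Fin P → ℝ) |
      ∀ p : Fin P,
        0 < t.2.2.2 p ∧ t.2.2.2 p < t.1 + c * ρ p ∧
        |Real.cos ω * (pathX c ω (θ p) (φ p) (ρ p) (t.2.2.2 p) t.1 - x₀) +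
            Real.sin ω * (pathY c ω (θ p) (φ p) (ρ p) (t.2.2.2 p) t.1 - y₀)|
          ≤ t.2.1 / 2 ∧
        |-Real.sin ω * (pathX c ω (θ p) (φ p) (ρ p) (t.2.2.2 p) t.1 - x₀) +
            Real.cos ω * (pathY c ω (θ p) (φ p) (ρ p) (t.2.2.2 p) t.1 - y₀)|
          ≤ t.2.2.1 / 2 } := by
  rintro ⟨d, l, w, n⟩ hs ⟨d', l', w', n'⟩ ht a b ha hb hab
  have hlt : ∀ u v u' v' : ℝ, u < v → u' < v' → a * u + b * u' < a * v + b * v' := by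
    intro u v u' v' h h'
    rcases ha.eq_or_lt with h0 | h0
    · have hb1 : b = 1 := by linarith
      subst hb1
      rw [← h0]
      linarith
    · have h1 := mul_lt_mul_of_pos_left h h0
      have h2 := mul_le_mul_of_nonneg_left h'.le hb
      linarith
  have habs : ∀ A B C L M : ℝ, |A| ≤ L / 2 → |B| ≤ M / 2 → C = a * A + b * B →
      |C| ≤ (a * L + b * M) / 2 := by
    intro A B C L M hA hB hC
    rw [abs_le] at *
    have h1 := mul_le_mul_of_nonneg_left hA.1 ha
    have h2 := mul_le_mul_of_nonneg_left hA.2 ha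
    have h3 := mul_le_mul_of_nonneg_left hB.1 hb
    have h4 := mul_le_mul_of_nonneg_left hB.2 hb
    constructor <;> linarith
  have hb' : b = 1 - a := by linarith
  intro p
  obtain ⟨h1, h2, h3, h4⟩ := hs p
  obtain ⟨k1, k2, k3, k4⟩ := ht p
  simp only [Prod.smul_mk, Prod.mk_add_mk, Pi.add_apply, Pi.smul_apply, smul_eq_mul] at *
  refine ⟨?_, ?_, habs _ _ _ _ _ h3 k3 ?_, habs _ _ _ _ _ h4 k4 ?_⟩
  · have := hlt _ _ _ _ h1 k1
    linarith
  · have := hlt _ _ _ _ h2 k2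
    have e : a * (d + c * ρ p) + b * (d' + c * ρ p) = a * d + b * d' + c * ρ p := by
      rw [hb']; ring
    linarith
  · rw [hb']; unfold pathX pathY; ring
  · rw [hb']; unfold pathX pathY; ring
end

section
/- Let P ≥ 1 and for each p ∈ {1,…,P} let u_p = (cos θ_p, sin θ_p) and w_p = (cos(φ_p + ω), sin(φ_p + ω)) be unit vectors in ℝ² that are linearly independent, and let v_p ∈ ℝ² (the displacement of the p-th path origin from the disk center). Suppose r > 0 and there are multipliers γ_p ≥ 0 satisfying: (i) Σ_p γ_p > 0; (ii) for every p, ‖v_p‖² ≤ r²; (iii) complementary slackness: γ_p·(‖v_p‖² − r²) = 0 for every p; (iv) stationarity in each ν_p: γ_p·⟨v_p, u_p + w_p⟩ = 0 for every p; (v) stationarity in d₁: Σ_p γ_p·⟨v_p, w_p⟩ = 0. Then there exist two distinct indices p₁ ≠ p₂ with ‖v_{p₁}‖² = r² and ‖v_{p₂}‖² = r², i.e., at least two path origins lie on the boundary of the minimized disk. -/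
/-- Paper's Proposition 6 (HV size sensing by disk minimization), via the KKT
conditions of problem (E6): with unit direction vectors
`u_p = (cos θ_p, sin θ_p)` and `w_p = (cos(φ_p + ω), sin(φ_p + ω))` linearly
independent for each path, displacements `v_p` of the path origins from the
disk center, radius `r > 0`, and nonnegative multipliers `γ_p` (not all zero)
satisfying primal feasibility, complementary slackness, and the stationarity
conditions in each `ν_p` and in `d₁`, at least two distinct path origins lie
on the boundary of the minimized disk. -/
theorem diskMin_two_boundary_paths (P : ℕ) (hP : 1 ≤ P)
    (θ φ : Fin P → ℝ) (ω : ℝ) (u w v : Fin P → ℝ × ℝ)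
    (hu : ∀ p, u p = (Real.cos (θ p), Real.sin (θ p)))
    (hw : ∀ p, w p = (Real.cos (φ p + ω), Real.sin (φ p + ω)))
    (hind : ∀ p, LinearIndependent ℝ ![u p, w p])
    (r : ℝ) (hr : 0 < r)
    (γ : Fin P → ℝ) (hγ : ∀ p, 0 ≤ γ p)
    (hpos : 0 < ∑ p, γ p)
    (hfeas : ∀ p, (v p).1 ^ 2 + (v p).2 ^ 2 ≤ r ^ 2)
    (hcs : ∀ p, γ p * ((v p).1 ^ 2 + (v p).2 ^ 2 - r ^ 2) = 0)
    (hstat_ν : ∀ p, γ p *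
        ((v p).1 * ((u p).1 + (w p).1) + (v p).2 * ((u p).2 + (w p).2)) = 0)
    (hstat_d : ∑ p, γ p * ((v p).1 * (w p).1 + (v p).2 * (w p).2) = 0) :
    ∃ p₁ p₂ : Fin P, p₁ ≠ p₂ ∧
      (v p₁).1 ^ 2 + (v p₁).2 ^ 2 = r ^ 2 ∧
      (v p₂).1 ^ 2 + (v p₂).2 ^ 2 = r ^ 2 := by
  obtain ⟨p, -, hp⟩ : ∃ p ∈ Finset.univ, 0 < γ p := by
    by_contra! h
    exact absurd hpos (not_lt.mpr (Finset.sum_nonpos h))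
  have hb : ∀ q, γ q ≠ 0 → (v q).1 ^ 2 + (v q).2 ^ 2 = r ^ 2 := fun q hq => by
    have := (mul_eq_zero.mp (hcs q)).resolve_left hq
    linarith
  by_contra hcon
  have hz : ∀ q, q ≠ p → γ q = 0 := fun q hq => by
    by_contra h
    exact hcon ⟨q, p, hq, hb q h, hb p hp.ne'⟩
  rw [Finset.sum_eq_single p (fun q _ hq => by rw [hz q hq, zero_mul])
    (fun h => absurd (Finset.mem_univ p) h)] at hstat_d
  have h1 := (mul_eq_zero.mp hstat_d).resolve_left hp.ne'
  have h2 := (mul_eq_zero.mp (hstat_ν p)).resolve_left hp.ne'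
  have hn := hb p hp.ne'
  have hi := LinearIndependent.pair_iff.mp (hind p)
  have hc : (u p).1 ^ 2 + (u p).2 ^ 2 = 1 := by
    rw [hu p]
    exact Real.cos_sq_add_sin_sq _
  generalize u p = U at *
  generalize w p = W at *
  generalize v p = V at *
  obtain ⟨a, b⟩ := V
  obtain ⟨x, y⟩ := U
  obtain ⟨z, t⟩ := W
  simp only at h1 h2 hn hc
  have h3 : a * x + b * y = 0 := by linarith
  have h4 := (hi (-b * z + a * t) (-(-b * x + a * y)) (by
    ext
    · simp only [Prod.smul_mk, Prod.mk_add_mk, smul_eq_mul, Prod.fst_zero]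
      linear_combination t * h3 - y * h1
    · simp only [Prod.smul_mk, Prod.mk_add_mk, smul_eq_mul, Prod.snd_zero]
      linear_combination x * h1 - z * h3)).2
  have h5 : r ^ 2 = 0 := by
    linear_combination (-r ^ 2) * hc - (x ^ 2 + y ^ 2) * hn + (a * x + b * y) * h3 - (-b * x + a * y) * h4
  exact hr.ne' (pow_eq_zero_iff (two_ne_zero) |>.mp h5)
end
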